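/- PAC-Bayes bound (Theorem 1 / Maurer): Let Z be a measurable space, D a probability measure on Z, H a measurable space of hypotheses, and ℓ : H × Z → [0,1] a measurable loss. Let Q₀ be a probability measure on H (the prior) and let n ≥ 1, δ ∈ (0,1]. Then with probability at least 1 − δ over an i.i.d. sample S = (z₁,…,zₙ) drawn from Dⁿ, simultaneously for every probability measure Q on H (the posterior): kl(R̂_S(Q) ‖ R_D(Q)) ≤ (KL(Q ‖ Q₀) + log(2√n/δ)) / n, where R̂_S(Q) = E_{h∼Q}[(1/n) Σ_{i=1}^n ℓ(h, z_i)], R_D(Q) = E_{h∼Q} E_{z∼D}[ℓ(h, z)]. -/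

import Mathlib

open MeasureTheory ProbabilityTheory
open scoped Classical

/-- The binary Kullback–Leibler divergence between Bernoulli parameters `q` and `q'`. -/
noncomputable def binKl (q q' : ℝ) : ℝ :=
  q * Real.log (q / q') + (1 - q) * Real.log ((1 - q) / (1 - q'))

/-- The Kullback–Leibler divergence between measures `Q` and `Q₀`, taken to be `+∞` when
`Q` is not absolutely continuous with respect to `Q₀` (or the log-density is not integrable). -/
noncomputable def klDiv {α : Type*} [MeasurableSpace α] (Q Q₀ : Measure α) : ENNReal :=
  if Q ≪ Q₀ ∧ Integrable (fun a => Real.log (Q.rnDeriv Q₀ a).toReal) Q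
  then ENNReal.ofReal (∫ a, Real.log (Q.rnDeriv Q₀ a).toReal ∂Q)
  else ⊤


/-- KT numerators. -/
noncomputable def ktA (k : ℕ) : ℝ := ∏ j ∈ Finset.range k, ((j : ℝ) + 1 / 2)

lemma ktA_succ (k : ℕ) : ktA (k + 1) = ktA k * ((k : ℝ) + 1 / 2) := by
  simp [ktA, Finset.prod_range_succ]

lemma ktA_pos (k : ℕ) : 0 < ktA k := Finset.prod_pos fun j _ => by positivity

lemma ktA_sum {ι : Type*} [DecidableEq ι] (s : Finset ι) :
    ∑ t ∈ s.powerset, ktA t.card * ktA (s.card - t.card) = (s.card.factorial : ℝ) := by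
  induction s using Finset.induction_on with
  | empty => simp [ktA]
  | insert a s ha ih =>
    rw [Finset.sum_powerset_insert ha, ← Finset.sum_add_distrib, Finset.card_insert_of_notMem ha,
      Nat.factorial_succ, Nat.cast_mul, ← ih, Finset.mul_sum]
    refine Finset.sum_congr rfl fun t ht => ?_
    have hts := Finset.mem_powerset.1 ht
    have hle := Finset.card_le_card hts
    rw [Finset.card_insert_of_notMem (fun h => ha (hts h))]
    obtain ⟨m, hm⟩ := Nat.exists_eq_add_of_le hle
    rw [hm, show t.card + m + 1 - t.card = m + 1 by omega,
      show t.card + m + 1 - (t.card + 1) = m by omega, show t.card + m - t.card = m by omega,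
      ktA_succ, ktA_succ]
    push_cast
    ring

lemma kt_phi_anti : AntitoneOn (fun x : ℝ => Real.log (x + 1 / 2) + x * Real.log x
    - (x + 1) * Real.log (x + 1)) (Set.Ici 0) := by
  have hd : ∀ x ∈ interior (Set.Ici (0 : ℝ)), HasDerivAt (fun x : ℝ => Real.log (x + 1 / 2)
      + x * Real.log x - (x + 1) * Real.log (x + 1))
      (1 / (x + 1 / 2) + (Real.log x + 1) - (Real.log (x + 1) + 1)) x := by
    intro x hx
    rw [interior_Ici, Set.mem_Ioi] at hx
    have h1 : HasDerivAt (fun x : ℝ => Real.log (x + 1 / 2)) (1 / (x + 1 / 2)) x :=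
      ((hasDerivAt_id x).add_const (1 / 2)).log (by simp only [id]; positivity)
    have h2 := Real.hasDerivAt_mul_log hx.ne'
    have h3 := (Real.hasDerivAt_mul_log (x := x + 1) (by positivity)).comp_add_const x 1
    exact (h1.add h2).sub h3
  apply antitoneOn_of_deriv_nonpos (convex_Ici 0)
  · have h1 : ContinuousOn (fun x : ℝ => Real.log (x + 1 / 2)) (Set.Ici 0) := by
      apply ContinuousOn.log (by fun_prop)
      intro x hx
      have : (0 : ℝ) ≤ x := hx
      positivity
    have h3 : Continuous (fun x : ℝ => (x + 1) * Real.log (x + 1)) :=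
      Real.continuous_mul_log.comp (continuous_id.add continuous_const)
    exact (h1.add Real.continuous_mul_log.continuousOn).sub h3.continuousOn
  · intro x hx
    exact (hd x hx).differentiableAt.differentiableWithinAt
  · intro x hx
    rw [(hd x hx).deriv]
    rw [interior_Ici, Set.mem_Ioi] at hx
    have h := Real.le_log_one_add_of_nonneg (x := 1 / x) (by positivity)
    have e1 : 2 * (1 / x) / (1 / x + 2) = 1 / (x + 1 / 2) := by
      field_simp
      ring
    have e2 : 1 + 1 / x = (x + 1) / x := by field_simp
    rw [e1, e2, Real.log_div (by positivity) hx.ne'] at h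
    linarith

/-- ratio of KT normalized values -/
noncomputable def ktR (k : ℕ) : ℝ := ((k : ℝ) + 1 / 2) * (k : ℝ) ^ k / ((k : ℝ) + 1) ^ (k + 1)

lemma ktR_pos (k : ℕ) : 0 < ktR k := by
  unfold ktR
  have : (0 : ℝ) < (k : ℝ) ^ k := by
    rcases Nat.eq_zero_or_pos k with rfl | h
    · simp
    · positivity
  positivity

lemma ktR_eq (k : ℕ) : Real.log (ktR k) = Real.log ((k : ℝ) + 1 / 2) + k * Real.log k
    - ((k : ℝ) + 1) * Real.log ((k : ℝ) + 1) := by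
  have h : ((k : ℝ) ^ k) ≠ 0 := by
    rcases Nat.eq_zero_or_pos k with rfl | h
    · simp
    · positivity
  unfold ktR
  rw [Real.log_div (mul_ne_zero (by positivity) h) (by positivity),
    Real.log_mul (by positivity) h, Real.log_pow, Real.log_pow]
  push_cast
  ring

lemma ktR_anti {k m : ℕ} (h : k ≤ m) : ktR m ≤ ktR k := by
  rw [← Real.log_le_log_iff (ktR_pos m) (ktR_pos k), ktR_eq, ktR_eq]
  exact kt_phi_anti (Set.mem_Ici.2 (Nat.cast_nonneg k)) (Set.mem_Ici.2 (Nat.cast_nonneg m))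
    (Nat.cast_le.2 h)

noncomputable def ktB (k : ℕ) : ℝ := ktA k / (k : ℝ) ^ k

lemma npow_pos' (k : ℕ) : (0 : ℝ) < (k : ℝ) ^ k := by
  rcases Nat.eq_zero_or_pos k with rfl | h
  · simp
  · positivity

lemma ktB_pos (k : ℕ) : 0 < ktB k := div_pos (ktA_pos k) (npow_pos' k)

lemma ktB_succ (k : ℕ) : ktB (k + 1) = ktB k * ktR k := by
  unfold ktB ktR
  rw [ktA_succ]
  have := (npow_pos' k).ne'
  push_cast
  field_simp

lemma ktB_mul (k m : ℕ) : ktB (k + m) ≤ ktB k * ktB m := by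
  induction k with
  | zero => simp [ktB, ktA]
  | succ k ih =>
    rw [show k + 1 + m = (k + m) + 1 by ring, ktB_succ, ktB_succ]
    calc ktB (k + m) * ktR (k + m) ≤ (ktB k * ktB m) * ktR k :=
          mul_le_mul ih (ktR_anti (by omega)) (ktR_pos _).le (mul_pos (ktB_pos _) (ktB_pos _)).le
      _ = _ := by ring

lemma ktA_ge (n : ℕ) (hn : 1 ≤ n) : (n.factorial : ℝ) ≤ 2 * Real.sqrt n * ktA n := by
  induction n, hn using Nat.le_induction with
  | base => simp [ktA]
  | succ n hn ih =>
    rw [ktA_succ, Nat.factorial_succ]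
    push_cast
    have hs : ((n : ℝ) + 1) * Real.sqrt n ≤ Real.sqrt (n + 1) * (n + 1 / 2) := by
      apply le_of_sq_le_sq _ (by positivity)
      rw [mul_pow, mul_pow, Real.sq_sqrt (by positivity), Real.sq_sqrt (by positivity)]
      have : (0 : ℝ) ≤ n := by positivity
      nlinarith
    calc ((n : ℝ) + 1) * n.factorial ≤ (n + 1) * (2 * Real.sqrt n * ktA n) := by gcongr
      _ = 2 * ((n + 1) * Real.sqrt n) * ktA n := by ring
      _ ≤ 2 * (Real.sqrt (n + 1) * (n + 1 / 2)) * ktA n := by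
        have := (ktA_pos n).le
        gcongr
      _ = _ := by ring

/-- maximal likelihood value -/
noncomputable def ktK (k m : ℕ) : ℝ :=
  ((k : ℝ) / ((k + m : ℕ) : ℝ)) ^ k * ((m : ℝ) / ((k + m : ℕ) : ℝ)) ^ m

lemma ktK_pos (k m : ℕ) : 0 < ktK k m := by
  unfold ktK
  apply mul_pos
  · rcases Nat.eq_zero_or_pos k with rfl | h
    · simp
    · positivity
  · rcases Nat.eq_zero_or_pos m with rfl | h
    · simp
    · positivity

lemma ktK_le (k m : ℕ) (h : 1 ≤ k + m) :
    ktK k m ≤ 2 * Real.sqrt ((k + m : ℕ) : ℝ) * (ktA k * ktA m / ((k + m).factorial : ℝ)) := by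
  have h1 := ktB_mul k m
  have h2 := ktA_ge (k + m) h
  have hk := npow_pos' k
  have hm := npow_pos' m
  have hN := npow_pos' (k + m)
  have hf : (0 : ℝ) < ((k + m).factorial : ℝ) := by exact_mod_cast Nat.factorial_pos _
  unfold ktB at h1
  rw [div_mul_div_comm, div_le_div_iff₀ hN (by positivity)] at h1
  have e : ktK k m = (k : ℝ) ^ k * (m : ℝ) ^ m / ((k + m : ℕ) : ℝ) ^ (k + m) := by
    unfold ktK
    rw [div_pow, div_pow, div_mul_div_comm, pow_add]
  rw [e, ← mul_div_assoc, div_le_div_iff₀ hN hf]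
  calc (k : ℝ) ^ k * (m : ℝ) ^ m * ((k + m).factorial : ℝ)
      ≤ (k : ℝ) ^ k * (m : ℝ) ^ m * (2 * Real.sqrt ((k + m : ℕ) : ℝ) * ktA (k + m)) := by gcongr
    _ = 2 * Real.sqrt ((k + m : ℕ) : ℝ) * (ktA (k + m) * ((k : ℝ) ^ k * (m : ℝ) ^ m)) := by ring
    _ ≤ 2 * Real.sqrt ((k + m : ℕ) : ℝ) * (ktA k * ktA m * ((k + m : ℕ) : ℝ) ^ (k + m)) := by
      gcongr
    _ = _ := by ring

lemma ktK_sum (n : ℕ) (hn : 1 ≤ n) :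
    ∑ t ∈ (Finset.univ : Finset (Fin n)).powerset, ktK t.card (n - t.card)
      ≤ 2 * Real.sqrt n := by
  have hf : (0 : ℝ) < (n.factorial : ℝ) := by exact_mod_cast Nat.factorial_pos _
  have hle : ∀ t ∈ (Finset.univ : Finset (Fin n)).powerset, ktK t.card (n - t.card)
      ≤ 2 * Real.sqrt n * (ktA t.card * ktA (n - t.card) / (n.factorial : ℝ)) := by
    intro t _
    have htn : t.card ≤ n := by simpa using Finset.card_le_univ t
    have := ktK_le t.card (n - t.card) (by omega)
    rwa [Nat.add_sub_cancel' htn] at this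
  refine (Finset.sum_le_sum hle).trans ?_
  rw [← Finset.mul_sum, ← Finset.sum_div]
  have := ktA_sum (Finset.univ : Finset (Fin n))
  rw [Finset.card_univ, Fintype.card_fin] at this
  rw [this, div_self hf.ne', mul_one]

lemma kt_scal (k n : ℕ) (hn : 1 ≤ n) (u : ℝ) (hu : 0 ≤ u) :
    u ^ k * Real.exp (k - n * u) ≤ ((k : ℝ) / n) ^ k := by
  have hn' : (0 : ℝ) < n := by exact_mod_cast hn
  rcases Nat.eq_zero_or_pos k with rfl | h
  · simp; positivity
  · have hk : (0 : ℝ) < k := by exact_mod_cast h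
    have e : Real.exp (k - n * u) = Real.exp (1 - n * u / k) ^ k := by
      rw [← Real.exp_nat_mul]; congr 1; field_simp
    rw [e, ← mul_pow]
    apply pow_le_pow_left₀ (by positivity)
    have h1 := Real.add_one_le_exp (n * u / k - 1)
    have h2 : Real.exp (1 - n * u / k) * Real.exp (n * u / k - 1) = 1 := by
      rw [← Real.exp_add]; simp
    have h3 : n * u / k * Real.exp (1 - n * u / k) ≤ 1 := by
      rw [mul_comm]
      refine le_trans ?_ h2.le
      exact mul_le_mul_of_nonneg_left (by linarith) (Real.exp_pos _).le
    rw [le_div_iff₀ hn']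
    calc u * Real.exp (1 - n * u / k) * n = k * (n * u / k * Real.exp (1 - n * u / k)) := by
          field_simp
      _ ≤ k * 1 := by gcongr
      _ = k := mul_one _

/-- multilinear weights -/
noncomputable def ktW {n : ℕ} (x : Fin n → ℝ) (t : Finset (Fin n)) : ℝ :=
  (∏ i ∈ t, x i) * ∏ i ∈ Finset.univ \ t, (1 - x i)

lemma ktW_eq {n : ℕ} (x : Fin n → ℝ) (t : Finset (Fin n)) :
    ktW x t = ∏ i, (if i ∈ t then x i else 1 - x i) := by
  rw [← Finset.prod_mul_prod_compl t]
  unfold ktW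
  congr 1
  · exact Finset.prod_congr rfl fun i hi => by simp [hi]
  · rw [Finset.compl_eq_univ_sdiff]
    refine Finset.prod_congr rfl fun i hi => ?_
    have : i ∉ t := by simpa using hi
    simp [this]

lemma ktW_mem {n : ℕ} (x : Fin n → ℝ) (hx : ∀ i, x i ∈ Set.Icc (0 : ℝ) 1)
    (t : Finset (Fin n)) : ktW x t ∈ Set.Icc (0 : ℝ) 1 := by
  rw [ktW_eq]
  have h0 : ∀ i, 0 ≤ (if i ∈ t then x i else 1 - x i) := fun i => by
    have := hx i
    split_ifs
    · exact this.1
    · linarith [this.2]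
  refine ⟨Finset.prod_nonneg fun i _ => h0 i, Finset.prod_le_one (fun i _ => h0 i) fun i _ => ?_⟩
  have := hx i
  split_ifs
  · exact this.2
  · linarith [this.1]

lemma kt_exp_le {n : ℕ} (x : Fin n → ℝ) (hx : ∀ i, x i ∈ Set.Icc (0 : ℝ) 1) (α β : ℝ) :
    Real.exp (α * ∑ i, x i + β * (n - ∑ i, x i)) ≤
      ∑ t ∈ (Finset.univ : Finset (Fin n)).powerset,
        ktW x t * (Real.exp α ^ t.card * Real.exp β ^ (n - t.card)) := by
  have h1 : α * ∑ i, x i + β * (n - ∑ i, x i) = ∑ i, (x i * α + (1 - x i) * β) := by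
    rw [Finset.sum_add_distrib, ← Finset.sum_mul, ← Finset.sum_mul, Finset.sum_sub_distrib]
    simp
    ring
  rw [h1, Real.exp_sum]
  have h2 : ∏ i, Real.exp (x i * α + (1 - x i) * β)
      ≤ ∏ i, (x i * Real.exp α + (1 - x i) * Real.exp β) := by
    refine Finset.prod_le_prod (fun i _ => (Real.exp_pos _).le) fun i _ => ?_
    have := convexOn_exp.2 (Set.mem_univ α) (Set.mem_univ β) (hx i).1
      (sub_nonneg.2 (hx i).2) (by ring)
    simpa using this
  refine h2.trans (le_of_eq ?_)
  rw [Finset.prod_add]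
  refine Finset.sum_congr rfl fun t _ => ?_
  rw [Finset.prod_mul_distrib, Finset.prod_mul_distrib, Finset.prod_const, Finset.prod_const,
    Finset.card_sdiff_of_subset (Finset.subset_univ t), Finset.card_univ, Fintype.card_fin]
  unfold ktW
  ring

/-- the dominating function -/
noncomputable def ktPhi {n : ℕ} (x : Fin n → ℝ) (p : ℝ) : ENNReal :=
  ∑ t ∈ (Finset.univ : Finset (Fin n)).powerset,
    ENNReal.ofReal (ktW x t) * (ENNReal.ofReal (ktK t.card (n - t.card)) /
      ENNReal.ofReal (p ^ t.card * (1 - p) ^ (n - t.card)))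

lemma kt_exp_le_phi {n : ℕ} (hn : 1 ≤ n) (x : Fin n → ℝ) (hx : ∀ i, x i ∈ Set.Icc (0 : ℝ) 1)
    (p : ℝ) (hp : p ∈ Set.Icc (0 : ℝ) 1) (α β : ℝ) :
    ENNReal.ofReal (Real.exp (α * ∑ i, x i + β * (n - ∑ i, x i)
      + (n - n * (Real.exp α * p) - n * (Real.exp β * (1 - p))))) ≤ ktPhi x p := by
  have hp1 : 0 ≤ 1 - p := sub_nonneg.2 hp.2
  have hp0 : 0 ≤ p := hp.1
  set E := Real.exp (n - n * (Real.exp α * p) - n * (Real.exp β * (1 - p))) with hE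
  have h1 : Real.exp (α * ∑ i, x i + β * (n - ∑ i, x i)
      + (n - n * (Real.exp α * p) - n * (Real.exp β * (1 - p)))) ≤
      ∑ t ∈ (Finset.univ : Finset (Fin n)).powerset,
        ktW x t * (Real.exp α ^ t.card * Real.exp β ^ (n - t.card) * E) := by
    rw [Real.exp_add, ← hE]
    refine (mul_le_mul_of_nonneg_right (kt_exp_le x hx α β) (Real.exp_pos _).le).trans
      (le_of_eq ?_)
    rw [Finset.sum_mul]
    exact Finset.sum_congr rfl fun t _ => by ring
  refine (ENNReal.ofReal_le_ofReal h1).trans ?_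
  have hE0 : 0 < E := Real.exp_pos _
  rw [ENNReal.ofReal_sum_of_nonneg (fun t _ => mul_nonneg (ktW_mem x hx t).1 (by positivity))]
  unfold ktPhi
  refine Finset.sum_le_sum fun t _ => ?_
  rw [ENNReal.ofReal_mul (ktW_mem x hx t).1]
  gcongr
  rw [ENNReal.le_div_iff_mul_le
    (Or.inr (by simpa using ktK_pos _ _)) (Or.inl ENNReal.ofReal_ne_top),
    ← ENNReal.ofReal_mul (by positivity)]
  apply ENNReal.ofReal_le_ofReal
  have htn : t.card ≤ n := by simpa using Finset.card_le_univ t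
  have hs : ((t.card : ℝ)) + ((n - t.card : ℕ) : ℝ) = n := by
    rw [← Nat.cast_add, Nat.add_sub_cancel' htn]
  have a1 := kt_scal t.card n hn (Real.exp α * p) (by positivity)
  have a2 := kt_scal (n - t.card) n hn (Real.exp β * (1 - p)) (by positivity)
  unfold ktK
  rw [Nat.add_sub_cancel' htn]
  refine le_trans (le_of_eq ?_) (mul_le_mul a1 a2 (by positivity) (by positivity))
  have : E = Real.exp (t.card - n * (Real.exp α * p)) *
      Real.exp ((n - t.card : ℕ) - n * (Real.exp β * (1 - p))) := by
    rw [hE, ← Real.exp_add]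
    congr 1
    linarith
  rw [this, mul_pow, mul_pow]
  ring

lemma kt_dv {H : Type*} [MeasurableSpace H] (Q Q₀ : Measure H) [IsProbabilityMeasure Q]
    [IsProbabilityMeasure Q₀] (hac : Q ≪ Q₀) (hint : Integrable (llr Q Q₀) Q) (f : H → ℝ)
    (hf : Integrable f Q) (hef : Integrable (fun x => Real.exp (f x)) Q₀) :
    ∫ x, f x ∂Q ≤ ∫ x, llr Q Q₀ x ∂Q + Real.log (∫ x, Real.exp (f x) ∂Q₀) := by
  have := isProbabilityMeasure_tilted hef
  have h1 := InformationTheory.integral_llr_add_sub_measure_univ_nonneg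
    (hac.trans (absolutelyContinuous_tilted hef)) (integrable_llr_tilted_right hac hf hint hef)
  rw [integral_llr_tilted_right hac hf hef hint] at h1
  simp at h1
  linarith

lemma kt_pi {Z : Type*} [MeasurableSpace Z] (D : Measure Z) [IsProbabilityMeasure D] (n : ℕ)
    (g : Z → ℝ) (hg : Measurable g) (hg01 : ∀ z, g z ∈ Set.Icc (0 : ℝ) 1)
    (t : Finset (Fin n)) :
    ∫⁻ S, ENNReal.ofReal (ktW (fun i => g (S i)) t) ∂(Measure.pi fun _ : Fin n => D)
      = ENNReal.ofReal ((∫ z, g z ∂D) ^ t.card * (1 - ∫ z, g z ∂D) ^ (n - t.card)) := by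
  have hgi : Integrable g D :=
    Integrable.of_mem_Icc 0 1 hg.aemeasurable (Filter.Eventually.of_forall hg01)
  have hm : Measurable fun S : Fin n → Z => ktW (fun i => g (S i)) t := by
    unfold ktW
    fun_prop
  rw [← ofReal_integral_eq_lintegral_ofReal
    (Integrable.of_mem_Icc 0 1 hm.aemeasurable
      (Filter.Eventually.of_forall fun S => ktW_mem _ (fun i => hg01 _) t))
    (Filter.Eventually.of_forall fun S => (ktW_mem _ (fun i => hg01 _) t).1)]
  congr 1
  simp_rw [ktW_eq]
  rw [integral_fintype_prod_eq_prod (fun i z => if i ∈ t then g z else 1 - g z)]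
  have : ∀ i, ∫ z, (if i ∈ t then g z else 1 - g z) ∂D
      = if i ∈ t then (∫ z, g z ∂D) else 1 - ∫ z, g z ∂D := by
    intro i
    split_ifs
    · rfl
    · rw [integral_sub (integrable_const _) hgi]; simp
  simp_rw [this]
  rw [← ktW_eq (fun _ => ∫ z, g z ∂D) t]
  unfold ktW
  rw [Finset.prod_const, Finset.prod_const,
    Finset.card_sdiff_of_subset (Finset.subset_univ t), Finset.card_univ, Fintype.card_fin]

lemma kt_phi_int {Z : Type*} [MeasurableSpace Z] (D : Measure Z) [IsProbabilityMeasure D] (n : ℕ)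
    (hn : 1 ≤ n) (g : Z → ℝ) (hg : Measurable g) (hg01 : ∀ z, g z ∈ Set.Icc (0 : ℝ) 1) :
    ∫⁻ S, ktPhi (fun i => g (S i)) (∫ z, g z ∂D) ∂(Measure.pi fun _ : Fin n => D)
      ≤ ENNReal.ofReal (2 * Real.sqrt n) := by
  unfold ktPhi
  have hm : ∀ t, Measurable fun S : Fin n → Z => ENNReal.ofReal (ktW (fun i => g (S i)) t) := by
    intro t
    unfold ktW
    fun_prop
  rw [lintegral_finsetSum _ (fun t _ => (hm t).mul_const _)]
  refine le_trans ?_ (ENNReal.ofReal_le_ofReal (ktK_sum n hn))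
  rw [ENNReal.ofReal_sum_of_nonneg (fun t _ => (ktK_pos _ _).le)]
  refine Finset.sum_le_sum fun t _ => ?_
  rw [lintegral_mul_const _ (hm t), kt_pi D n g hg hg01]
  exact ENNReal.mul_div_le

lemma kt_binKl (q p B : ℝ) (hq : q ∈ Set.Icc (0 : ℝ) 1) (hp : p ∈ Set.Icc (0 : ℝ) 1)
    (h0 : binKl q p ≤ 0 → binKl q p ≤ B)
    (h : ∀ α β : ℝ, α * q + β * (1 - q) + (1 - Real.exp α * p - Real.exp β * (1 - p)) ≤ B) :
    binKl q p ≤ B := by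
  obtain ⟨hq0, hq1⟩ := hq
  obtain ⟨hp0, hp1⟩ := hp
  rcases hp0.eq_or_lt with rfl | hp0
  · apply h0
    simp [binKl]
    exact mul_nonpos_of_nonneg_of_nonpos (by linarith)
      (Real.log_nonpos (by linarith) (by linarith))
  rcases hp1.eq_or_lt with rfl | hp1
  · apply h0
    simp [binKl]
    exact mul_nonpos_of_nonneg_of_nonpos (by linarith)
      (Real.log_nonpos (by linarith) (by linarith))
  have hp1' : 0 < 1 - p := by linarith
  apply le_of_forall_pos_le_add
  intro ε hε
  have key : ∀ q p : ℝ, 0 ≤ q → 0 < p →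
      q * Real.log (q / p) ≤ Real.log ((q + ε / 2) / p) * q := by
    intro q p hq hp
    rcases hq.eq_or_lt with rfl | hq
    · simp
    · rw [mul_comm]
      gcongr
      linarith
  have h1 := h (Real.log ((q + ε / 2) / p)) (Real.log ((1 - q + ε / 2) / (1 - p)))
  rw [Real.exp_log (by positivity),
    Real.exp_log (div_pos (by linarith) hp1'), div_mul_cancel₀ _ hp0.ne',
    div_mul_cancel₀ _ hp1'.ne'] at h1
  have k1 := key q p hq0 hp0
  have k2 := key (1 - q) (1 - p) (by linarith) hp1'
  unfold binKl
  linarith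

/-- PAC-Bayes bound (Maurer): with probability at least `1 − δ` over an i.i.d. sample
`S ∼ Dⁿ`, simultaneously for every posterior probability measure `Q`,
`kl(R̂_S(Q) ‖ R_D(Q)) ≤ (KL(Q ‖ Q₀) + log(2√n/δ)) / n`. -/
theorem pac_bayes_kl_bound
    {Z H : Type*} [MeasurableSpace Z] [MeasurableSpace H]
    (D : Measure Z) [IsProbabilityMeasure D]
    (ℓ : H → Z → ℝ) (hℓmeas : Measurable (Function.uncurry ℓ))
    (hℓ01 : ∀ h z, ℓ h z ∈ Set.Icc (0 : ℝ) 1)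
    (Q₀ : Measure H) [IsProbabilityMeasure Q₀]
    (n : ℕ) (hn : 1 ≤ n) (δ : ℝ) (hδ : δ ∈ Set.Ioc (0 : ℝ) 1) :
    (Measure.pi fun _ : Fin n => D)
      {S : Fin n → Z | ∀ Q : Measure H, IsProbabilityMeasure Q →
        ENNReal.ofReal
            (binKl (∫ h, (n : ℝ)⁻¹ * ∑ i, ℓ h (S i) ∂Q) (∫ h, ∫ z, ℓ h z ∂D ∂Q))
          ≤ (klDiv Q Q₀ + ENNReal.ofReal (Real.log (2 * Real.sqrt n / δ))) / n }
      ≥ ENNReal.ofReal (1 - δ) := by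
  have hn0 : (0 : ℝ) < n := by exact_mod_cast hn
  have hsec : ∀ h, Measurable (ℓ h) := fun h => hℓmeas.of_uncurry_left
  have hsec2 : ∀ z, Measurable fun h => ℓ h z := fun z => hℓmeas.of_uncurry_right
  have hpm : Measurable fun h => ∫ z, ℓ h z ∂D :=
    (hℓmeas.stronglyMeasurable.integral_prod_right (ν := D)).measurable
  have hℓi : ∀ h, Integrable (ℓ h) D := fun h =>
    Integrable.of_mem_Icc 0 1 (hsec h).aemeasurable (Filter.Eventually.of_forall (hℓ01 h))
  have hp01 : ∀ h, (∫ z, ℓ h z ∂D) ∈ Set.Icc (0 : ℝ) 1 := fun h => by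
    refine ⟨integral_nonneg fun z => (hℓ01 h z).1, ?_⟩
    have := integral_mono (hℓi h) (integrable_const (1 : ℝ)) fun z => (hℓ01 h z).2
    simpa using this
  have hΦm : Measurable fun y : (Fin n → Z) × H =>
      ktPhi (fun i => ℓ y.2 (y.1 i)) (∫ z, ℓ y.2 z ∂D) := by
    unfold ktPhi ktW
    have h1 : ∀ i, Measurable fun y : (Fin n → Z) × H => ℓ y.2 (y.1 i) := fun i =>
      hℓmeas.comp (measurable_snd.prodMk ((measurable_pi_apply i).comp measurable_fst))
    have h2 : Measurable fun y : (Fin n → Z) × H => ∫ z, ℓ y.2 z ∂D := hpm.comp measurable_snd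
    fun_prop
  set P := Measure.pi fun _ : Fin n => D with hP
  set Ψ : (Fin n → Z) → ENNReal := fun S =>
    ∫⁻ h, ktPhi (fun i => ℓ h (S i)) (∫ z, ℓ h z ∂D) ∂Q₀ with hΨ
  have hΨm : Measurable Ψ := hΦm.lintegral_prod_right'
  have hΨi : ∫⁻ S, Ψ S ∂P ≤ ENNReal.ofReal (2 * Real.sqrt n) := by
    rw [hΨ, lintegral_lintegral_swap hΦm.aemeasurable]
    calc ∫⁻ h, ∫⁻ S, ktPhi (fun i => ℓ h (S i)) (∫ z, ℓ h z ∂D) ∂P ∂Q₀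
        ≤ ∫⁻ _h, ENNReal.ofReal (2 * Real.sqrt n) ∂Q₀ :=
          lintegral_mono fun h => kt_phi_int D n hn (ℓ h) (hsec h) (hℓ01 h)
      _ = _ := by simp
  have hC0 : 0 < 2 * Real.sqrt n / δ := by
    have := hδ.1
    positivity
  have hmark := mul_meas_ge_le_lintegral (μ := P) hΨm (ENNReal.ofReal (2 * Real.sqrt n / δ))
  have hbad : P {S | ENNReal.ofReal (2 * Real.sqrt n / δ) ≤ Ψ S} ≤ ENNReal.ofReal δ := by
    have h1 := hmark.trans hΨi
    rw [mul_comm, ← ENNReal.le_div_iff_mul_le (Or.inl (by simpa using hC0))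
      (Or.inl ENNReal.ofReal_ne_top), ← ENNReal.ofReal_div_of_pos hC0] at h1
    have e : 2 * Real.sqrt n / (2 * Real.sqrt n / δ) = δ := by
      have : Real.sqrt n ≠ 0 := by positivity
      have := hδ.1.ne'
      field_simp
    rwa [e] at h1
  have hgood : ENNReal.ofReal (1 - δ) ≤ P {S | Ψ S < ENNReal.ofReal (2 * Real.sqrt n / δ)} := by
    have hms : MeasurableSet {S | ENNReal.ofReal (2 * Real.sqrt n / δ) ≤ Ψ S} :=
      measurableSet_le measurable_const hΨm
    have hc := prob_compl_eq_one_sub (μ := P) hms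
    have e : {S | ENNReal.ofReal (2 * Real.sqrt n / δ) ≤ Ψ S}ᶜ
        = {S | Ψ S < ENNReal.ofReal (2 * Real.sqrt n / δ)} := by
      ext S; simp
    rw [e] at hc
    rw [hc, ENNReal.ofReal_sub _ hδ.1.le, ENNReal.ofReal_one]
    exact tsub_le_tsub_left hbad 1
  refine ge_iff_le.2 (hgood.trans (measure_mono ?_))
  intro S hS Q hQ
  have hS' : Ψ S < ENNReal.ofReal (2 * Real.sqrt n / δ) := hS
  by_cases hkl : Q ≪ Q₀ ∧ Integrable (fun a => Real.log (Q.rnDeriv Q₀ a).toReal) Q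
  swap
  · have : klDiv Q Q₀ = ⊤ := if_neg hkl
    rw [this, top_add, ENNReal.top_div_of_ne_top (ENNReal.natCast_ne_top n)]
    exact le_top
  have hkld : klDiv Q Q₀ = ENNReal.ofReal (∫ a, Real.log (Q.rnDeriv Q₀ a).toReal ∂Q) := if_pos hkl
  rw [hkld]
  obtain ⟨hac, hint⟩ := hkl
  set K := ∫ a, Real.log (Q.rnDeriv Q₀ a).toReal ∂Q with hK
  set L := Real.log (2 * Real.sqrt n / δ) with hL
  refine le_trans ?_ (ENNReal.div_le_div_right ENNReal.ofReal_add_le _)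
  rw [← ENNReal.ofReal_natCast n, ← ENNReal.ofReal_div_of_pos hn0]
  by_cases hneg : binKl (∫ h, (n : ℝ)⁻¹ * ∑ i, ℓ h (S i) ∂Q) (∫ h, ∫ z, ℓ h z ∂D ∂Q) ≤ 0
  · rw [ENNReal.ofReal_of_nonpos hneg]; exact zero_le
  apply ENNReal.ofReal_le_ofReal
  -- integrability of the two risks
  have hqm : Measurable fun h => (n : ℝ)⁻¹ * ∑ i, ℓ h (S i) := by
    have := fun i => hsec2 (S i)
    fun_prop
  have hq01 : ∀ h, (n : ℝ)⁻¹ * ∑ i, ℓ h (S i) ∈ Set.Icc (0 : ℝ) 1 := fun h => by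
    constructor
    · exact mul_nonneg (by positivity) (Finset.sum_nonneg fun i _ => (hℓ01 h _).1)
    · have : ∑ i, ℓ h (S i) ≤ ∑ _i : Fin n, (1 : ℝ) :=
        Finset.sum_le_sum fun i _ => (hℓ01 h _).2
      rw [inv_mul_le_iff₀ hn0]
      simpa using this
  have hqi : Integrable (fun h => (n : ℝ)⁻¹ * ∑ i, ℓ h (S i)) Q :=
    Integrable.of_mem_Icc 0 1 hqm.aemeasurable (Filter.Eventually.of_forall hq01)
  have hpi : Integrable (fun h => ∫ z, ℓ h z ∂D) Q :=
    Integrable.of_mem_Icc 0 1 hpm.aemeasurable (Filter.Eventually.of_forall hp01)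
  have hmean : ∀ f : H → ℝ, Integrable f Q → (∀ h, f h ∈ Set.Icc (0 : ℝ) 1) →
      ∫ h, f h ∂Q ∈ Set.Icc (0 : ℝ) 1 := fun f hf hf01 => by
    refine ⟨integral_nonneg fun h => (hf01 h).1, ?_⟩
    have := integral_mono hf (integrable_const (1 : ℝ)) fun h => (hf01 h).2
    simpa using this
  refine kt_binKl _ _ _ (hmean _ hqi hq01) (hmean _ hpi hp01) (fun h => absurd h hneg) ?_
  intro α β
  set q : H → ℝ := fun h => (n : ℝ)⁻¹ * ∑ i, ℓ h (S i) with hq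
  set p : H → ℝ := fun h => ∫ z, ℓ h z ∂D with hp
  set f : H → ℝ := fun h => n * (α * q h + β * (1 - q h)
    + (1 - Real.exp α * p h - Real.exp β * (1 - p h))) with hf
  have hfm : Measurable f := by fun_prop
  have i1 : Integrable (fun h => α * q h) Q := hqi.const_mul α
  have i2 : Integrable (fun h => β * (1 - q h)) Q := ((integrable_const 1).sub hqi).const_mul β
  have i3 : Integrable (fun h => Real.exp α * p h) Q := hpi.const_mul _
  have i4 : Integrable (fun h => Real.exp β * (1 - p h)) Q :=
    ((integrable_const 1).sub hpi).const_mul _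
  have i5 : Integrable (fun h => 1 - Real.exp α * p h) Q := (integrable_const 1).sub i3
  have i6 : Integrable (fun h => α * q h + β * (1 - q h)) Q := i1.add i2
  have i7 : Integrable (fun h => 1 - Real.exp α * p h - Real.exp β * (1 - p h)) Q := i5.sub i4
  have hfi : Integrable f Q := ((i1.add i2).add (i5.sub i4)).const_mul _
  have hfint : ∫ h, f h ∂Q = n * (α * (∫ h, q h ∂Q) + β * (1 - ∫ h, q h ∂Q)
      + (1 - Real.exp α * (∫ h, p h ∂Q) - Real.exp β * (1 - ∫ h, p h ∂Q))) := by
    rw [hf, integral_const_mul, integral_add i6 i7, integral_add i1 i2,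
      integral_sub i5 i4, integral_sub (integrable_const 1) i3, integral_const_mul α q,
      integral_const_mul β (fun h => 1 - q h), integral_const_mul (Real.exp α) p,
      integral_const_mul (Real.exp β) (fun h => 1 - p h),
      integral_sub (integrable_const 1) hqi, integral_sub (integrable_const 1) hpi]
    simp
  have hle : ∀ h, ENNReal.ofReal (Real.exp (f h)) ≤ ktPhi (fun i => ℓ h (S i)) (p h) := fun h => by
    have h1 := kt_exp_le_phi hn (fun i => ℓ h (S i)) (fun i => hℓ01 h _) (p h) (hp01 h) α β
    convert h1 using 3
    simp only [hf, hq]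
    field_simp
  have hlint : ∫⁻ h, ENNReal.ofReal (Real.exp (f h)) ∂Q₀ < ENNReal.ofReal (2 * Real.sqrt n / δ) :=
    (lintegral_mono hle).trans_lt hS'
  have hem : Measurable fun h => Real.exp (f h) := Real.measurable_exp.comp hfm
  have hefi : Integrable (fun h => Real.exp (f h)) Q₀ := by
    refine ⟨hem.aestronglyMeasurable, ?_⟩
    rw [hasFiniteIntegral_iff_ofReal (Filter.Eventually.of_forall fun h => (Real.exp_pos _).le)]
    exact hlint.trans ENNReal.ofReal_lt_top
  have hdv := kt_dv Q Q₀ hac hint f hfi hefi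
  have hlog : Real.log (∫ h, Real.exp (f h) ∂Q₀) ≤ L := by
    apply Real.log_le_log (integral_exp_pos hefi)
    rw [← ofReal_integral_eq_lintegral_ofReal hefi
      (Filter.Eventually.of_forall fun h => (Real.exp_pos _).le)] at hlint
    exact ((ENNReal.ofReal_lt_ofReal_iff hC0).1 hlint).le
  have hK' : ∫ x, llr Q Q₀ x ∂Q = K := rfl
  rw [le_div_iff₀ hn0]
  rw [hfint, hK'] at hdv
  linarith
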